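/- Let H be a graph on vertex set {1,...,r} and G a graph with vertex subsets V_1,...,V_r (not necessarily disjoint) such that for each edge (i,j) of H, the pair (V_i,V_j) is lower-(p_{ij},ε)-regular, meaning e(A',B') ≥ p_{ij}|A'||B'| − ε|V_i||V_j| for all A' ⊆ V_i, B' ⊆ V_j. Then the number of homomorphisms from H to G mapping vertex i into V_i is at least (Π_{(i,j)∈E(H)} p_{ij} − e(H)·ε)·Π_{i=1}^r |V_i|. -/

import Mathlib

open Finset

/-!
Impose the edges of `H` one at a time. When `ij` is added, fix the images of all vertices other
than `i` and `j`: every edge imposed so far misses `i` or misses `j`, so the admissible images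
`(x, y)` of `i` and `j` form a rectangle `A' × B'`, and lower regularity of `(Vs i, Vs j)` bounds
from below the number of pairs in it that are edges of `G`. Each edge thus keeps at least a
proportion `p` of the maps up to a loss of `ε * ∏ k, #(Vs k)`, and earlier losses do not grow
because `p ≤ 1`. Instead of splitting the maps into fibres with prescribed values off `i` and `j`,
the two values of every map `f` are resampled over `Vs i ×ˢ Vs j`, which counts each map equally
often.
-/

/-- A relation `r` is lower-`(p, ε)`-regular between `s` and `t` if between any two subsets it has
density at least `p`, up to an error `ε` measured relative to the full pair `s × t`. -/
def IsLowerRegular {α β 𝕜 : Type*} [CommRing 𝕜] [LE 𝕜] (r : α → β → Prop)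
    [∀ a, DecidablePred (r a)] (s : Finset α) (t : Finset β) (p ε : 𝕜) : Prop :=
  ∀ s' ⊆ s, ∀ t' ⊆ t, p * #s' * #t' - ε * #s * #t ≤ #(Rel.interedges r s' t')

theorem IsLowerRegular.le_card_filter_product {α β 𝕜 : Type*} [CommRing 𝕜] [LE 𝕜]
    {r : α → β → Prop} [∀ a, DecidablePred (r a)] {s : Finset α} {t : Finset β} {p ε : 𝕜}
    (h : IsLowerRegular r s t p ε) (a : α → Prop) (b : β → Prop) [DecidablePred a]
    [DecidablePred b] :
    p * #{e ∈ s ×ˢ t | a e.1 ∧ b e.2} - ε * #s * #t ≤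
      #{e ∈ s ×ˢ t | (a e.1 ∧ b e.2) ∧ r e.1 e.2} := by
  rw [filter_product, card_product, Nat.cast_mul, ← mul_assoc, ← filter_filter, filter_product]
  exact h _ (filter_subset a s) _ (filter_subset b t)

section OrderedRing

variable {𝕜 : Type*} [CommRing 𝕜] [LinearOrder 𝕜] [IsStrictOrderedRing 𝕜]

section Resampling

variable {ι : Type*} [Fintype ι] [DecidableEq ι] {α : ι → Type*} (s : ∀ i, Finset (α i)) (i j : ι)

lemma sum_piFinset_sum_update {M : Type*} [AddCommMonoid M] (F : (∀ i, α i) → M) :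
    ∑ f ∈ Fintype.piFinset s, ∑ x ∈ s i, F (Function.update f i x) =
      #(s i) • ∑ f ∈ Fintype.piFinset s, F f := by
  -- Exchanging `x` with `f i` is an involution of the pairs `(f, x)`.
  let swap (q : (∀ k, α k) × α i) : (∀ k, α k) × α i := (Function.update q.1 i q.2, q.1 i)
  have swap_mem : ∀ q ∈ Fintype.piFinset s ×ˢ s i, swap q ∈ Fintype.piFinset s ×ˢ s i := by
    simp only [mem_product, Fintype.mem_piFinset]
    refine fun q hq => ⟨fun k => ?_, hq.1 i⟩
    obtain rfl | hk := eq_or_ne k i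
    · simpa [swap] using hq.2
    · simpa [swap, hk] using hq.1 k
  have swap_swap (q) : swap (swap q) = q := by simp [swap]
  calc ∑ f ∈ Fintype.piFinset s, ∑ x ∈ s i, F (Function.update f i x)
      = ∑ q ∈ Fintype.piFinset s ×ˢ s i, F (swap q).1 :=
        (sum_product _ _ fun q => F (swap q).1).symm
    _ = ∑ q ∈ Fintype.piFinset s ×ˢ s i, F q.1 :=
        sum_nbij' swap swap swap_mem swap_mem (fun q _ => swap_swap q) (fun q _ => swap_swap q)
          fun _ _ => rfl
    _ = #(s i) • ∑ f ∈ Fintype.piFinset s, F f := by simp [sum_product, sum_nsmul]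

theorem sum_piFinset_le_sum_of_update {F F' : (∀ i, α i) → 𝕜}
    (h : ∀ f ∈ Fintype.piFinset s,
      ∑ e ∈ s i ×ˢ s j, F (Function.update (Function.update f i e.1) j e.2) ≤
        ∑ e ∈ s i ×ˢ s j, F' (Function.update (Function.update f i e.1) j e.2)) :
    ∑ f ∈ Fintype.piFinset s, F f ≤ ∑ f ∈ Fintype.piFinset s, F' f := by
  obtain hs | ⟨f₀, hf₀⟩ := (Fintype.piFinset s).eq_empty_or_nonempty
  · simp [hs]
  rw [Fintype.mem_piFinset] at hf₀
  have hi : (0 : 𝕜) < #(s i) := Nat.cast_pos.2 (card_pos.2 ⟨_, hf₀ i⟩)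
  have hj : (0 : 𝕜) < #(s j) := Nat.cast_pos.2 (card_pos.2 ⟨_, hf₀ j⟩)
  have sum_update (F : (∀ i, α i) → 𝕜) :
      ∑ f ∈ Fintype.piFinset s,
          ∑ e ∈ s i ×ˢ s j, F (Function.update (Function.update f i e.1) j e.2) =
        #(s i) * (#(s j) * ∑ f ∈ Fintype.piFinset s, F f) := by
    simp_rw [sum_product]
    rw [sum_piFinset_sum_update s i fun f => ∑ y ∈ s j, F (Function.update f j y),
      sum_piFinset_sum_update s j F, nsmul_eq_mul, nsmul_eq_mul]
  have average := sum_le_sum h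
  rw [sum_update, sum_update] at average
  exact le_of_mul_le_mul_left (le_of_mul_le_mul_left average hi) hj

end Resampling

theorem IsLowerRegular.le_card_filter_piFinset {ι : Type*} [Fintype ι] [DecidableEq ι]
    {α : ι → Type*} {s : ∀ i, Finset (α i)} {i j : ι} {r : α i → α j → Prop}
    [∀ a, DecidablePred (r a)] {p ε : 𝕜} (h : IsLowerRegular r (s i) (s j) p ε)
    (hij : i ≠ j) {A B : (∀ i, α i) → Prop} [DecidablePred A] [DecidablePred B]
    (hA : DependsOn A {j}ᶜ) (hB : DependsOn B {i}ᶜ) :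
    p * #{f ∈ Fintype.piFinset s | A f ∧ B f} - ε * #(Fintype.piFinset s) ≤
      #{f ∈ Fintype.piFinset s | (A f ∧ B f) ∧ r (f i) (f j)} := by
  have hA' (f x y) :
      A (Function.update (Function.update f i x) j y) = A (Function.update f i x) :=
    hA fun k hk => Function.update_of_ne hk _ _
  have hB' (f x y) :
      B (Function.update (Function.update f i x) j y) = B (Function.update f j y) :=
    hB fun k hk => by rw [Function.update_comm hij, Function.update_of_ne hk]
  have average := sum_piFinset_le_sum_of_update s i j
    (F := fun f => p * (if A f ∧ B f then 1 else 0) - ε)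
    (F' := fun f => if (A f ∧ B f) ∧ r (f i) (f j) then 1 else 0) fun f _ => by
      have rectangle := h.le_card_filter_product
        (fun x => A (Function.update f i x)) (fun y => B (Function.update f j y))
      simpa only [hA', hB', Function.update_self, Function.update_of_ne hij, sum_sub_distrib,
        ← mul_sum, sum_boole, sum_const, card_product, nsmul_eq_mul, Nat.cast_mul,
        mul_assoc, mul_comm, mul_left_comm] using rectangle
  simpa only [sum_sub_distrib, ← mul_sum, sum_boole, sum_const, nsmul_eq_mul, mul_comm]
    using average

section EdgePreserving

variable {ι V : Type*}

lemma dependsOn_forall_map_mem (S : Set (Sym2 ι)) (E : Set (Sym2 V)) (i : ι) :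
    DependsOn (fun f : ι → V => ∀ e ∈ S, i ∉ e → e.map f ∈ E) {i}ᶜ := by
  refine fun f g hfg => propext <| forall₃_congr fun e _ he => ?_
  rw [Sym2.map_congr fun k hk => hfg k (ne_of_mem_of_not_mem hk he)]

lemma forall_mem_iff_of_mk_notMem {S : Set (Sym2 ι)} {i j : ι} (hij : i ≠ j) (hS : s(i, j) ∉ S)
    {P : Sym2 ι → Prop} :
    (∀ e ∈ S, P e) ↔ (∀ e ∈ S, j ∉ e → P e) ∧ ∀ e ∈ S, i ∉ e → P e := by
  refine ⟨fun h => ⟨fun e he _ => h e he, fun e he _ => h e he⟩, fun ⟨hj, hi⟩ e he => ?_⟩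
  by_cases hie : i ∈ e
  · refine hj e he fun hje => hS ?_
    rwa [← (Sym2.mem_and_mem_iff hij).1 ⟨hie, hje⟩]
  · exact hi e he hie

variable [Fintype ι] [DecidableEq ι]

/-- The maps `f` with `f i ∈ Vs i` for all `i` that send every pair in `S` to an edge of `G`. Taking
a set of pairs rather than a graph on `ι` lets edges be imposed one at a time. -/
def edgePreservingMaps (G : SimpleGraph V) [DecidableRel G.Adj] (Vs : ι → Finset V)
    (S : Finset (Sym2 ι)) : Finset (ι → V) :=
  {f ∈ Fintype.piFinset Vs | ∀ e ∈ S, e.map f ∈ G.edgeSet}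

variable (G : SimpleGraph V) [DecidableRel G.Adj] (Vs : ι → Finset V)

lemma card_edgePreservingMaps_empty : #(edgePreservingMaps G Vs ∅) = ∏ i, #(Vs i) := by
  simp [edgePreservingMaps]

lemma card_edgePreservingMaps_edgeFinset (H : SimpleGraph ι) [Fintype H.edgeSet] :
    #(edgePreservingMaps G Vs H.edgeFinset) =
      Nat.card {f : ι → V // (∀ i, f i ∈ Vs i) ∧ ∀ i j, H.Adj i j → G.Adj (f i) (f j)} := by
  rw [← Nat.subtype_card]
  simp [edgePreservingMaps, Sym2.forall]

variable {G Vs}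

lemma IsLowerRegular.le_card_edgePreservingMaps_insert {i j : ι} {p ε : 𝕜}
    (h : IsLowerRegular G.Adj (Vs i) (Vs j) p ε) (hij : i ≠ j) {S : Finset (Sym2 ι)}
    (hS : s(i, j) ∉ S) :
    p * #(edgePreservingMaps G Vs S) - ε * ∏ k, (#(Vs k) : 𝕜) ≤
      #(edgePreservingMaps G Vs (insert s(i, j) S)) := by
  have regular := h.le_card_filter_piFinset hij
    (dependsOn_forall_map_mem (S : Set (Sym2 ι)) G.edgeSet j)
    (dependsOn_forall_map_mem (S : Set (Sym2 ι)) G.edgeSet i)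
  simp only [← forall_mem_iff_of_mk_notMem hij (mem_coe.not.2 hS), Fintype.card_piFinset]
    at regular
  simpa [edgePreservingMaps, and_comm] using regular

theorem le_card_edgePreservingMaps {H : SimpleGraph ι} {p : Sym2 ι → 𝕜} {ε : 𝕜} (hε : 0 ≤ ε)
    (hp : ∀ e ∈ H.edgeSet, p e ∈ Set.Icc 0 1)
    (hreg : ∀ i j, H.Adj i j → IsLowerRegular G.Adj (Vs i) (Vs j) (p s(i, j)) ε)
    (S : Finset (Sym2 ι)) (hS : (S : Set (Sym2 ι)) ⊆ H.edgeSet) :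
    (∏ e ∈ S, p e - #S * ε) * ∏ i, (#(Vs i) : 𝕜) ≤ #(edgePreservingMaps G Vs S) := by
  induction S using Finset.induction_on with
  | empty => simp [card_edgePreservingMaps_empty]
  | insert e S he ih =>
    rw [coe_insert, Set.insert_subset_iff] at hS
    obtain ⟨heH, hSH⟩ := hS
    set N : 𝕜 := ∏ i, (#(Vs i) : 𝕜)
    have hN : 0 ≤ N := prod_nonneg fun _ _ => Nat.cast_nonneg _
    have hp0 : 0 ≤ p e := (hp e heH).1
    have herr : p e * (#S * ε * N) ≤ #S * ε * N :=
      mul_le_of_le_one_left (mul_nonneg (mul_nonneg (Nat.cast_nonneg _) hε) hN) (hp e heH).2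
    calc (∏ e ∈ insert e S, p e - #(insert e S) * ε) * N
        = p e * (∏ e ∈ S, p e) * N - #S * ε * N - ε * N := by
          rw [prod_insert he, card_insert_of_notMem he]; push_cast; ring
      _ ≤ p e * (∏ e ∈ S, p e) * N - p e * (#S * ε * N) - ε * N := by gcongr
      _ = p e * ((∏ e ∈ S, p e - #S * ε) * N) - ε * N := by ring
      _ ≤ p e * #(edgePreservingMaps G Vs S) - ε * N := by gcongr; exact ih hSH
      _ ≤ #(edgePreservingMaps G Vs (insert e S)) := by
          induction e with
          | _ i j =>
            have hadj : H.Adj i j := heH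
            exact (hreg i j hadj).le_card_edgePreservingMaps_insert hadj.ne he

end EdgePreserving

theorem stmt_8_general {ι V : Type*} [Fintype ι] (G : SimpleGraph V) [DecidableRel G.Adj]
    (H : SimpleGraph ι) [Fintype H.edgeSet] (Vs : ι → Finset V) (p : Sym2 ι → 𝕜) (ε : 𝕜)
    (hε : 0 ≤ ε) (hp : ∀ e ∈ H.edgeSet, p e ∈ Set.Icc 0 1)
    (hreg : ∀ i j, H.Adj i j → IsLowerRegular G.Adj (Vs i) (Vs j) (p s(i, j)) ε) :
    (∏ e ∈ H.edgeFinset, p e - #H.edgeFinset * ε) * ∏ i, (#(Vs i) : 𝕜) ≤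
      Nat.card {f : ι → V // (∀ i, f i ∈ Vs i) ∧ ∀ i j, H.Adj i j → G.Adj (f i) (f j)} := by
  classical
  rw [← card_edgePreservingMaps_edgeFinset]
  exact le_card_edgePreservingMaps hε hp hreg H.edgeFinset H.coe_edgeFinset.subset

end OrderedRing

theorem stmt_8 {V : Type*} [Fintype V] [DecidableEq V] (G : SimpleGraph V)
    [DecidableRel G.Adj]
    (r : ℕ) (H : SimpleGraph (Fin r)) [DecidableRel H.Adj]
    (Vs : Fin r → Finset V) (pm : Fin r → Fin r → ℝ) (ε : ℝ) (hε : 0 < ε)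
    (hsym : ∀ i j, pm i j = pm j i)
    (hpm : ∀ i j, 0 ≤ pm i j ∧ pm i j ≤ 1)
    (hreg : ∀ i j, H.Adj i j → ∀ A' ⊆ Vs i, ∀ B' ⊆ Vs j,
      (((A' ×ˢ B').filter fun e => G.Adj e.1 e.2).card : ℝ)
        ≥ pm i j * A'.card * B'.card - ε * (Vs i).card * (Vs j).card) :
    (Nat.card {f : Fin r → V // (∀ i, f i ∈ Vs i) ∧
        ∀ i j, H.Adj i j → G.Adj (f i) (f j)} : ℝ)
      ≥ ((∏ e ∈ H.edgeFinset, Sym2.lift ⟨fun i j => pm i j, hsym⟩ e)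
          - H.edgeFinset.card * ε) * ∏ i, ((Vs i).card : ℝ) := by
  exact stmt_8_general G H Vs (Sym2.lift ⟨pm, hsym⟩) ε hε.le
    (Sym2.ind fun i j _ => hpm i j) hreg
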